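/- arXiv:1509.02846 — 2 statements merged into one kernel-verified Lean document; each statement's English description precedes it below -/
import Mathlib

section
/- (Transition density of the β-SBM with drift μ; analytic form.) Fix z1 ∈ ℝ, β ∈ (−1,1)∖{0}, μ ∈ ℝ∖{0}, t > 0, x, y ∈ ℝ. Set s = 2·1_{[z1,∞)}(y) − 1, a₂ = |y−z1| + |x−z1| − |y−x| and D = |x−z1| + |y−z1| (= a₂ + |x−y|). Then e^{μ(y−x) − μ²t/2} · [ (1/2π) ∫_ℝ e^{−w²t/2} e^{−iw|x−y|} dw + (1/2π) ∫_ℝ e^{−w²t/2} (βs·iw − βμ)/(iw + βμ) · e^{−iw(a₂ + |x−y|)} dw ] − βμ(1 + βs) e^{μ(y−x) − μ²t/2} e^{β²μ²t/2} e^{βμ D} 1_{ℝ⁻}(βμ) = (2πt)^{−1/2} e^{μ(y−x) − μ²t/2} [ e^{−|x−y|²/(2t)} + βs e^{−D²/(2t)} ] − (1 + βs) βμ e^{μ(y−x) − μ²t/2 + β²μ²t/2 + βμ D} Φ^c( D/√t + βμ√t ). Moreover this common value equals p^{(0)}_μ(t,x,y) v^{(β)}_μ(t,x,y), where p^{(0)}_μ(t,x,y)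 = (2πt)^{−1/2} e^{−(y−x−μt)²/(2t)} and v^{(β)}_μ(t,x,y) = (1 − e^{−2x₁y₁/t}) 1_{x₁y₁>0} + (1 + βs) e^{−(2x₁y₁/t) 1_{x₁y₁>0}} [ 1 − βμ √(2πt) e^{(|x₁|+|y₁|+tβμ)²/(2t)} Φ^c((|x₁|+|y₁|+tβμ)/√t) ] with x₁ = x − z1, y₁ = y − z1. -/
open Complex MeasureTheory

/-- The Gaussian tail function Φᶜ(y) = (2π)^{-1/2} ∫_y^∞ e^{-u²/2} du. -/
noncomputable def gaussTail (y : ℝ) : ℝ :=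
  (Real.sqrt (2 * Real.pi))⁻¹ * ∫ u in Set.Ioi y, Real.exp (-u ^ 2 / 2)

/-!
Up to the Girsanov weight `e^{μ(y-x) - μ²t/2}`, the first integral is the Fourier inversion formula
for the heat kernel. With `b = βμ` and `c = βs`, the coefficient in the second integral is
`c - b(1 + c) / (iw + b)`, and for `b > 0` the resolvent is a Laplace transform,
`1 / (iw + b) = ∫₀^∞ e^{-(iw + b)u} du`. By Fubini its Gaussian integral is an exponentially
weighted integral of heat kernels over `[D, ∞)`, which completing the square turns into `Φᶜ`. For
`b < 0`, reflecting `w` replaces `Φᶜ` by `Φᶜ - 1`, and the indicator term restores `Φᶜ`.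

The product formula rests on `D² = (x - y)² + 4 x₁ y₁ 1_{x₁y₁ > 0}`, the reflection principle in
algebraic form: it makes the ratio of heat kernels at `D` and at `x - y` equal to
`e^{-(2x₁y₁/t) 1_{x₁y₁ > 0}}`.
-/

/-- The density at displacement `D` of Brownian motion at time `t`. -/
noncomputable def heatKernel (t D : ℝ) : ℝ :=
  (√(2 * Real.pi * t))⁻¹ * Real.exp (-D ^ 2 / (2 * t))

/-- The integrand `w ↦ e^{-w²t/2} e^{-iwD}` of the Fourier inversion formula for
`heatKernel t D`. -/
noncomputable def gaussWave (t D w : ℝ) : ℂ :=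
  Complex.exp (-(w : ℂ) ^ 2 * t / 2) * Complex.exp (-Complex.I * w * D)

/-- The transition density of the β-SBM with drift μ, stripped of the Girsanov weight
`e^{μ(y-x) - μ²t/2}`. The parameters are `c = βs`, `b = βμ`, the distance `d = |x - y|`, and the
length `D = |x - z1| + |y - z1|` of the path from `x` to `y` through the barrier. -/
noncomputable def barrierKernel (t c b d D : ℝ) : ℝ :=
  heatKernel t d + c * heatKernel t D -
    (1 + c) * b * Real.exp (b ^ 2 * t / 2 + b * D) * gaussTail (D / √t + b * √t)

section GaussianTail

lemma integrable_exp_neg_sq_div_two : Integrable fun u : ℝ => Real.exp (-u ^ 2 / 2) := by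
  convert! integrable_exp_neg_mul_sq (b := 1 / 2) (by norm_num) using 3
  ring

lemma integral_exp_neg_sq_div_two : ∫ u : ℝ, Real.exp (-u ^ 2 / 2) = √(2 * Real.pi) := by
  convert! integral_gaussian (1 / 2) using 2
  · congr 1 with u
    ring_nf
  · ring_nf

lemma sqrt_two_pi_mul_gaussTail (y : ℝ) :
    √(2 * Real.pi) * gaussTail y = ∫ u in Set.Ioi y, Real.exp (-u ^ 2 / 2) :=
  mul_inv_cancel_left₀ (by positivity) _

lemma gaussTail_neg (y : ℝ) : gaussTail (-y) = 1 - gaussTail y := by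
  have hreflect : √(2 * Real.pi) * gaussTail (-y) = ∫ u in Set.Iic y, Real.exp (-u ^ 2 / 2) := by
    have hcomp := integral_comp_neg_Ioi (-y) fun u : ℝ => Real.exp (-u ^ 2 / 2)
    simp only [neg_sq, neg_neg] at hcomp
    rw [sqrt_two_pi_mul_gaussTail, hcomp]
  have htotal := intervalIntegral.integral_Iic_add_Ioi
    (integrable_exp_neg_sq_div_two.integrableOn (s := Set.Iic y))
    integrable_exp_neg_sq_div_two.integrableOn
  rw [← hreflect, ← sqrt_two_pi_mul_gaussTail, integral_exp_neg_sq_div_two, ← mul_add] at htotal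
  exact eq_sub_of_add_eq ((mul_eq_left₀ (by positivity)).1 htotal)

lemma integral_comp_mul_add_Ioi {E : Type*} [NormedAddCommGroup E] [NormedSpace ℝ E]
    (g : ℝ → E) (a c : ℝ) {k : ℝ} (hk : 0 < k) :
    ∫ u in Set.Ioi a, g (k * u + c) = k⁻¹ • ∫ v in Set.Ioi (k * a + c), g v := by
  rw [integral_comp_mul_left_Ioi (fun v => g (v + c)) a hk,
    ← (measurePreserving_add_right volume c).setIntegral_preimage_emb
      (measurableEmbedding_addRight c) g (Set.Ioi (k * a + c))]
  simp

end GaussianTail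

section HeatKernel

variable {t : ℝ}

lemma exp_mul_heatKernel_add (ht : 0 < t) (b D u : ℝ) :
    Real.exp (-b * u) * heatKernel t (D + u) =
      (√(2 * Real.pi * t))⁻¹ * Real.exp (b ^ 2 * t / 2 + b * D) *
        Real.exp (-((√t)⁻¹ * u + (D / √t + b * √t)) ^ 2 / 2) := by
  have hsq : √t ^ 2 = t := Real.sq_sqrt ht.le
  have hlin : (√t)⁻¹ * u + (D / √t + b * √t) = (u + D + b * t) / √t := by
    field_simp
    rw [hsq]
    ring
  rw [heatKernel, mul_left_comm, mul_assoc _⁻¹, ← Real.exp_add, ← Real.exp_add, hlin, div_pow, hsq]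
  congr 2
  field_simp
  ring

lemma integral_exp_mul_heatKernel_add_Ioi (ht : 0 < t) (b D : ℝ) :
    ∫ u in Set.Ioi (0 : ℝ), Real.exp (-b * u) * heatKernel t (D + u) =
      Real.exp (b ^ 2 * t / 2 + b * D) * gaussTail (D / √t + b * √t) := by
  simp_rw [exp_mul_heatKernel_add ht]
  rw [integral_const_mul,
    integral_comp_mul_add_Ioi (fun v => Real.exp (-v ^ 2 / 2)) 0 _ (by positivity),
    mul_zero, zero_add, ← sqrt_two_pi_mul_gaussTail, smul_eq_mul, inv_inv,
    Real.sqrt_mul (by positivity) t]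
  field_simp

end HeatKernel

section GaussWave

@[fun_prop]
lemma continuous_gaussWave (t D : ℝ) : Continuous (gaussWave t D) := by
  unfold gaussWave
  fun_prop

lemma norm_gaussWave (t D w : ℝ) : ‖gaussWave t D w‖ = Real.exp (-(t / 2) * w ^ 2) := by
  have hphase : -(w : ℂ) ^ 2 * t / 2 + -Complex.I * w * D =
      (-(t / 2) * w ^ 2 : ℝ) + (-(w * D) : ℝ) * Complex.I := by
    push_cast
    ring
  rw [gaussWave, ← Complex.exp_add, hphase, Complex.norm_exp, Complex.add_re, Complex.ofReal_re,
    Complex.re_ofReal_mul, Complex.I_re, mul_zero, add_zero]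

lemma gaussWave_neg (t D w : ℝ) : gaussWave t D (-w) = gaussWave t (-D) w := by
  simp [gaussWave]

lemma gaussWave_add (t D u w : ℝ) :
    gaussWave t (D + u) w = gaussWave t D w * Complex.exp (-Complex.I * w * u) := by
  rw [gaussWave, gaussWave, mul_assoc (Complex.exp _), ← Complex.exp_add (-Complex.I * w * D),
    Complex.ofReal_add, mul_add]

variable {t : ℝ}

lemma integrable_gaussWave (ht : 0 < t) (D : ℝ) : Integrable (gaussWave t D) :=
  (integrable_exp_neg_mul_sq (half_pos ht)).mono' (by fun_prop)
    (.of_forall fun w => (norm_gaussWave t D w).le)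

lemma integral_gaussWave (ht : 0 < t) (D : ℝ) :
    ∫ w, gaussWave t D w = (2 * Real.pi * heatKernel t D : ℝ) := by
  have hconst : ((Real.pi : ℂ) / ((t / 2 : ℝ) : ℂ)) ^ (1 / 2 : ℂ) =
      (2 * Real.pi * (√(2 * Real.pi * t))⁻¹ : ℝ) := by
    have hsqrt : √(Real.pi / (t / 2)) = 2 * Real.pi * (√(2 * Real.pi * t))⁻¹ := by
      rw [Real.sqrt_eq_iff_mul_self_eq (by positivity) (by positivity), ← pow_two, mul_pow, inv_pow,
        Real.sq_sqrt (by positivity)]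
      field_simp
    rw [← hsqrt, Real.sqrt_eq_rpow, Complex.ofReal_cpow (by positivity)]
    push_cast
    rfl
  calc ∫ w, gaussWave t D w
      = ∫ w : ℝ, Complex.exp (Complex.I * (-D : ℂ) * w) *
          Complex.exp (-((t / 2 : ℝ) : ℂ) * w ^ 2) := by
        congr 1 with w
        rw [gaussWave, mul_comm]
        congr 2
        · ring
        · push_cast; ring
    _ = (2 * Real.pi * (√(2 * Real.pi * t))⁻¹ : ℝ) *
          Complex.exp (-(-D : ℂ) ^ 2 / (4 * ((t / 2 : ℝ) : ℂ))) := by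
        rw [fourierIntegral_gaussian (by simpa using ht), hconst]
    _ = (2 * Real.pi * heatKernel t D : ℝ) := by
        rw [heatKernel, ← mul_assoc, Complex.ofReal_mul _ (Real.exp _), Complex.ofReal_exp]
        congr 2
        push_cast
        ring

end GaussWave

section Resolvent

lemma I_mul_add_ne_zero {b : ℝ} (hb : b ≠ 0) (w : ℝ) : Complex.I * w + (b : ℂ) ≠ 0 :=
  fun h => hb (by simpa using congrArg Complex.re h)

lemma integral_gaussWave_add_mul_exp_Ioi (t : ℝ) {b : ℝ} (hb : 0 < b) (D w : ℝ) :
    ∫ u in Set.Ioi (0 : ℝ), gaussWave t (D + u) w * Real.exp (-b * u) =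
      gaussWave t D w / (Complex.I * w + b) := by
  have hexp (u : ℝ) : gaussWave t (D + u) w * Real.exp (-b * u) =
      gaussWave t D w * Complex.exp (-(Complex.I * w + b) * u) := by
    rw [gaussWave_add, Complex.ofReal_exp, mul_assoc, ← Complex.exp_add]
    congr 2
    push_cast
    ring
  simp_rw [hexp]
  rw [integral_const_mul, integral_exp_mul_complex_Ioi (by simpa using hb), Complex.ofReal_zero,
    mul_zero, Complex.exp_zero, neg_div_neg_eq, mul_one_div]

variable {t : ℝ}

lemma integrable_gaussWave_add_mul_exp (ht : 0 < t) {b : ℝ} (hb : 0 < b) (D : ℝ) :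
    Integrable (fun p : ℝ × ℝ => gaussWave t (D + p.2) p.1 * Real.exp (-b * p.2))
      (volume.prod (volume.restrict (Set.Ioi 0))) := by
  have hdecay : IntegrableOn (fun u : ℝ => Real.exp (-b * u)) (Set.Ioi 0) :=
    integrableOn_exp_mul_Ioi (neg_neg_of_pos hb) 0
  refine ((integrable_exp_neg_mul_sq (half_pos ht)).mul_prod hdecay).mono' ?_
    (.of_forall fun p => ?_)
  · unfold gaussWave
    exact Continuous.aestronglyMeasurable (by fun_prop)
  · rw [norm_mul, norm_gaussWave, Complex.norm_real, Real.norm_of_nonneg (Real.exp_nonneg _)]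

lemma integral_gaussWave_div_of_pos (ht : 0 < t) {b : ℝ} (hb : 0 < b) (D : ℝ) :
    ∫ w : ℝ, gaussWave t D w / (Complex.I * w + b) =
      (2 * Real.pi * (Real.exp (b ^ 2 * t / 2 + b * D) * gaussTail (D / √t + b * √t)) : ℝ) :=
  calc ∫ w : ℝ, gaussWave t D w / (Complex.I * w + b)
      = ∫ w : ℝ, ∫ u in Set.Ioi (0 : ℝ), gaussWave t (D + u) w * Real.exp (-b * u) := by
        simp_rw [integral_gaussWave_add_mul_exp_Ioi t hb]
    _ = ∫ u in Set.Ioi (0 : ℝ), ∫ w : ℝ, gaussWave t (D + u) w * Real.exp (-b * u) :=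
        integral_integral_swap (integrable_gaussWave_add_mul_exp ht hb D)
    _ = ∫ u in Set.Ioi (0 : ℝ),
          ((2 * Real.pi * (Real.exp (-b * u) * heatKernel t (D + u)) : ℝ) : ℂ) := by
        congr 1 with u
        rw [integral_mul_const, integral_gaussWave ht, ← Complex.ofReal_mul,
          mul_assoc (2 * Real.pi), mul_comm (heatKernel _ _)]
    _ = _ := by
        rw [integral_complex_ofReal, integral_const_mul, integral_exp_mul_heatKernel_add_Ioi ht]

lemma integral_gaussWave_div (ht : 0 < t) {b : ℝ} (hb : b ≠ 0) (D : ℝ) :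
    ∫ w : ℝ, gaussWave t D w / (Complex.I * w + b) =
      (2 * Real.pi * (Real.exp (b ^ 2 * t / 2 + b * D) *
        (gaussTail (D / √t + b * √t) - if b < 0 then 1 else 0)) : ℝ) := by
  rcases hb.lt_or_gt with hneg | hpos
  · calc ∫ w : ℝ, gaussWave t D w / (Complex.I * w + b)
        = -∫ w : ℝ, gaussWave t (-D) w / (Complex.I * w + (-b : ℝ)) := by
          rw [← integral_neg_eq_self, ← integral_neg]
          congr 1 with w
          rw [gaussWave_neg, ← div_neg]
          congr 1
          push_cast
          ring
      _ = _ := by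
          rw [integral_gaussWave_div_of_pos ht (neg_pos.2 hneg), if_pos hneg, ← Complex.ofReal_neg,
            show -D / √t + -b * √t = -(D / √t + b * √t) by ring, gaussTail_neg, neg_sq, neg_mul_neg]
          congr 1
          ring
  · rw [integral_gaussWave_div_of_pos ht hpos, if_neg hpos.not_gt, sub_zero]

lemma integrable_gaussWave_div (ht : 0 < t) {b : ℝ} (hb : b ≠ 0) (D : ℝ) :
    Integrable fun w : ℝ => gaussWave t D w / (Complex.I * w + b) := by
  refine ((integrable_gaussWave ht D).norm.mul_const |b|⁻¹).mono' ?_ (.of_forall fun w => ?_)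
  · have hcont : Continuous fun w : ℝ => gaussWave t D w / (Complex.I * w + b) :=
      Continuous.div (by fun_prop) (by fun_prop) (I_mul_add_ne_zero hb)
    exact hcont.aestronglyMeasurable
  · rw [norm_div, div_eq_mul_inv]
    gcongr
    simpa using Complex.abs_re_le_norm (Complex.I * w + b)

lemma integral_gaussWave_mul_reflection (ht : 0 < t) (c b D : ℝ) :
    ∫ w : ℝ, gaussWave t D w * ((c * (Complex.I * w) - b) / (Complex.I * w + b)) =
      (2 * Real.pi * (c * heatKernel t D - b * (1 + c) * (Real.exp (b ^ 2 * t / 2 + b * D) *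
        (gaussTail (D / √t + b * √t) - if b < 0 then 1 else 0))) : ℝ) := by
  rcases eq_or_ne b 0 with rfl | hb
  · -- At `w = 0` the quotient is `0 / 0 = 0` instead of `c`, which a null set does not notice.
    have hae : (fun w : ℝ => gaussWave t D w *
        ((c * (Complex.I * w) - (0 : ℝ)) / (Complex.I * w + (0 : ℝ)))) =ᵐ[volume]
        fun w => gaussWave t D w * c := by
      filter_upwards [volume.ae_ne 0] with w hw
      have hIw : Complex.I * w ≠ 0 := mul_ne_zero Complex.I_ne_zero (Complex.ofReal_ne_zero.2 hw)
      rw [Complex.ofReal_zero, sub_zero, add_zero, mul_div_cancel_right₀ _ hIw]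
    rw [integral_congr_ae hae, integral_mul_const, integral_gaussWave ht]
    push_cast
    ring
  · have hsplit (w : ℝ) : gaussWave t D w * ((c * (Complex.I * w) - b) / (Complex.I * w + b)) =
        c * gaussWave t D w - (b * (1 + c) : ℝ) * (gaussWave t D w / (Complex.I * w + b)) := by
      have := I_mul_add_ne_zero hb w
      push_cast
      field_simp
      ring
    simp_rw [hsplit]
    rw [integral_sub ((integrable_gaussWave ht D).const_mul _)
        ((integrable_gaussWave_div ht hb D).const_mul _),
      integral_const_mul, integral_const_mul, integral_gaussWave ht, integral_gaussWave_div ht hb,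
      ← Complex.ofReal_mul, ← Complex.ofReal_mul, ← Complex.ofReal_sub]
    congr 1
    ring

lemma barrierKernel_eq_fourier (ht : 0 < t) (c b d D : ℝ) :
    (barrierKernel t c b d D : ℂ) =
      1 / (2 * Real.pi) * (∫ w, gaussWave t d w) +
        1 / (2 * Real.pi) * (∫ w : ℝ, gaussWave t D w *
          ((c * (Complex.I * w) - b) / (Complex.I * w + b))) -
        b * (1 + c) * Complex.exp (b ^ 2 * t / 2) * Complex.exp (b * D) *
          (if b < 0 then 1 else 0) := by
  have hpi : (Real.pi : ℂ) ≠ 0 := Complex.ofReal_ne_zero.2 Real.pi_ne_zero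
  rw [integral_gaussWave ht, integral_gaussWave_mul_reflection ht, barrierKernel, Real.exp_add]
  push_cast [apply_ite Complex.ofReal]
  field_simp
  ring

end Resolvent

section DensityRatio

lemma abs_add_abs_sq (u v : ℝ) :
    (|u| + |v|) ^ 2 = (u - v) ^ 2 + 2 * (2 * u * v * if 0 < u * v then 1 else 0) := by
  have hsq : (|u| + |v|) ^ 2 = u ^ 2 + v ^ 2 + 2 * |u * v| := by
    rw [abs_mul, ← sq_abs u, ← sq_abs v]
    ring
  rw [hsq]
  split_ifs with h
  · rw [abs_of_pos h]; ring
  · rw [abs_of_nonpos (not_lt.1 h)]; ring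

lemma one_sub_exp_mul_ite (a : ℝ) (p : Prop) [Decidable p] :
    (1 - Real.exp a) * (if p then 1 else 0) = 1 - Real.exp (a * if p then 1 else 0) := by
  split_ifs <;> simp

variable {t : ℝ}

lemma exp_mul_heatKernel (ht : 0 < t) (μ d : ℝ) :
    Real.exp (μ * d - μ ^ 2 * t / 2) * heatKernel t d = heatKernel t (d - μ * t) := by
  rw [heatKernel, heatKernel, mul_left_comm, ← Real.exp_add]
  congr 2
  field_simp
  ring

lemma heatKernel_of_sq_eq (ht : 0 < t) {d D m : ℝ} (h : D ^ 2 = d ^ 2 + 2 * m) :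
    heatKernel t D = heatKernel t d * Real.exp (-m / t) := by
  rw [heatKernel, heatKernel, mul_assoc _⁻¹, ← Real.exp_add, h]
  congr 2
  field_simp
  ring

lemma barrierKernel_eq_heatKernel_mul (ht : 0 < t) (c b : ℝ) {d D m : ℝ}
    (h : D ^ 2 = d ^ 2 + 2 * m) :
    barrierKernel t c b d D = heatKernel t d * (1 - Real.exp (-m / t) +
      (1 + c) * Real.exp (-m / t) * (1 - b * √(2 * Real.pi * t) *
        Real.exp ((D + t * b) ^ 2 / (2 * t)) * gaussTail ((D + t * b) / √t))) := by
  have harg : (D + t * b) / √t = D / √t + b * √t := by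
    field_simp
    rw [Real.sq_sqrt ht.le]
    ring
  have hexp : Real.exp (b ^ 2 * t / 2 + b * D) =
      heatKernel t D * √(2 * Real.pi * t) * Real.exp ((D + t * b) ^ 2 / (2 * t)) := by
    rw [heatKernel, mul_right_comm _ _ √_, inv_mul_cancel₀ (by positivity), one_mul,
      ← Real.exp_add]
    congr 1
    field_simp
    ring
  rw [barrierKernel, hexp, harg, heatKernel_of_sq_eq ht h]
  ring

lemma barrierKernel_abs_sub (ht : 0 < t) (c b u v : ℝ) :
    barrierKernel t c b |u - v| (|u| + |v|) = heatKernel t (v - u) *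
      ((1 - Real.exp (-2 * u * v / t)) * (if 0 < u * v then 1 else 0) +
        (1 + c) * Real.exp (-(2 * u * v / t) * if 0 < u * v then 1 else 0) *
          (1 - b * √(2 * Real.pi * t) * Real.exp ((|u| + |v| + t * b) ^ 2 / (2 * t)) *
            gaussTail ((|u| + |v| + t * b) / √t))) := by
  have hd : heatKernel t |u - v| = heatKernel t (v - u) := by
    simp only [heatKernel, sq_abs, sub_sq_comm u v]
  have hsq : (|u| + |v|) ^ 2 = |u - v| ^ 2 + 2 * (2 * u * v * if 0 < u * v then 1 else 0) := by
    rw [sq_abs, abs_add_abs_sq]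
  have hexponent : -(2 * u * v * if 0 < u * v then 1 else 0) / t =
      -(2 * u * v / t) * if 0 < u * v then 1 else 0 := by
    ring
  rw [barrierKernel_eq_heatKernel_mul ht c b hsq, hd, hexponent,
    show -2 * u * v / t = -(2 * u * v / t) by ring, one_sub_exp_mul_ite]

end DensityRatio

theorem transition_density_one_barrier_drift_general
    (z1 β μ : ℝ) {t : ℝ} (ht : 0 < t) (x y : ℝ) :
    let s : ℝ := 2 * (if z1 ≤ y then (1 : ℝ) else 0) - 1
    let a2 : ℝ := |y - z1| + |x - z1| - |y - x|
    let D : ℝ := |x - z1| + |y - z1|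
    let E2 : ℝ :=
      (Real.sqrt (2 * Real.pi * t))⁻¹ * Real.exp (μ * (y - x) - μ ^ 2 * t / 2) *
          (Real.exp (-|x - y| ^ 2 / (2 * t)) + β * s * Real.exp (-D ^ 2 / (2 * t))) -
        (1 + β * s) * (β * μ) *
          Real.exp (μ * (y - x) - μ ^ 2 * t / 2 + β ^ 2 * μ ^ 2 * t / 2 + β * μ * D) *
          gaussTail (D / Real.sqrt t + β * μ * Real.sqrt t)
    (Complex.exp ((μ : ℂ) * (y - x) - (μ : ℂ) ^ 2 * t / 2) *
        ((1 / (2 * Real.pi) : ℂ) *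
            (∫ w : ℝ, Complex.exp (-(w : ℂ) ^ 2 * t / 2) *
              Complex.exp (-Complex.I * w * |x - y|)) +
          (1 / (2 * Real.pi) : ℂ) *
            (∫ w : ℝ, Complex.exp (-(w : ℂ) ^ 2 * t / 2) *
              (((β : ℂ) * s * (Complex.I * w) - (β : ℂ) * μ) /
                (Complex.I * w + (β : ℂ) * μ)) *
              Complex.exp (-Complex.I * w * (a2 + |x - y|)))) -
        (β : ℂ) * μ * (1 + (β : ℂ) * s) *
          Complex.exp ((μ : ℂ) * (y - x) - (μ : ℂ) ^ 2 * t / 2) *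
          Complex.exp ((β : ℂ) ^ 2 * μ ^ 2 * t / 2) *
          Complex.exp ((β : ℂ) * μ * D) *
          (if β * μ < 0 then (1 : ℂ) else 0) = (E2 : ℂ)) ∧
      E2 =
        ((Real.sqrt (2 * Real.pi * t))⁻¹ * Real.exp (-(y - x - μ * t) ^ 2 / (2 * t))) *
          ((1 - Real.exp (-2 * (x - z1) * (y - z1) / t)) *
              (if 0 < (x - z1) * (y - z1) then (1 : ℝ) else 0) +
            (1 + β * s) *
              Real.exp (-(2 * (x - z1) * (y - z1) / t) *
                (if 0 < (x - z1) * (y - z1) then (1 : ℝ) else 0)) *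
              (1 - β * μ * Real.sqrt (2 * Real.pi * t) *
                Real.exp ((|x - z1| + |y - z1| + t * β * μ) ^ 2 / (2 * t)) *
                gaussTail ((|x - z1| + |y - z1| + t * β * μ) / Real.sqrt t))) := by
  intro s a2 D E2
  have hD : ((a2 : ℂ) + (|x - y| : ℝ)) = (D : ℝ) := by
    rw [← Complex.ofReal_add]
    congr 1
    simp only [a2, D, abs_sub_comm y x]
    ring
  have hE2 : E2 = Real.exp (μ * (y - x) - μ ^ 2 * t / 2) *
      barrierKernel t (β * s) (β * μ) |x - y| D := by
    simp only [E2, barrierKernel, heatKernel, Real.exp_add, mul_pow]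
    ring
  constructor
  · rw [hE2, Complex.ofReal_mul, barrierKernel_eq_fourier ht, hD]
    simp only [gaussWave, mul_right_comm _ (_ / _)]
    push_cast [mul_pow]
    ring
  · have hratio := barrierKernel_abs_sub ht (β * s) (β * μ) (x - z1) (y - z1)
    rw [sub_sub_sub_cancel_right, sub_sub_sub_cancel_right, ← mul_assoc t β μ] at hratio
    rw [hE2, hratio, ← mul_assoc, exp_mul_heatKernel ht, heatKernel]

/-- transition density of the β-SBM with drift μ (analytic form):
the contour-integral expression equals the closed analytic formula, and this in turn
equals p⁰_μ(t,x,y)·v^{(β)}_μ(t,x,y). -/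
theorem transition_density_one_barrier_drift
    (z1 : ℝ) (β : ℝ) (hβ : β ∈ Set.Ioo (-1 : ℝ) 1) (hβ0 : β ≠ 0)
    (μ : ℝ) (hμ : μ ≠ 0) (t : ℝ) (ht : 0 < t) (x y : ℝ) :
    let s : ℝ := 2 * (if z1 ≤ y then (1 : ℝ) else 0) - 1
    let a2 : ℝ := |y - z1| + |x - z1| - |y - x|
    let D : ℝ := |x - z1| + |y - z1|
    let E2 : ℝ :=
      (Real.sqrt (2 * Real.pi * t))⁻¹ * Real.exp (μ * (y - x) - μ ^ 2 * t / 2) *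
          (Real.exp (-|x - y| ^ 2 / (2 * t)) + β * s * Real.exp (-D ^ 2 / (2 * t))) -
        (1 + β * s) * (β * μ) *
          Real.exp (μ * (y - x) - μ ^ 2 * t / 2 + β ^ 2 * μ ^ 2 * t / 2 + β * μ * D) *
          gaussTail (D / Real.sqrt t + β * μ * Real.sqrt t)
    (Complex.exp ((μ : ℂ) * (y - x) - (μ : ℂ) ^ 2 * t / 2) *
        ((1 / (2 * Real.pi) : ℂ) *
            (∫ w : ℝ, Complex.exp (-(w : ℂ) ^ 2 * t / 2) *
              Complex.exp (-Complex.I * w * |x - y|)) +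
          (1 / (2 * Real.pi) : ℂ) *
            (∫ w : ℝ, Complex.exp (-(w : ℂ) ^ 2 * t / 2) *
              (((β : ℂ) * s * (Complex.I * w) - (β : ℂ) * μ) /
                (Complex.I * w + (β : ℂ) * μ)) *
              Complex.exp (-Complex.I * w * (a2 + |x - y|)))) -
        (β : ℂ) * μ * (1 + (β : ℂ) * s) *
          Complex.exp ((μ : ℂ) * (y - x) - (μ : ℂ) ^ 2 * t / 2) *
          Complex.exp ((β : ℂ) ^ 2 * μ ^ 2 * t / 2) *
          Complex.exp ((β : ℂ) * μ * D) *
          (if β * μ < 0 then (1 : ℂ) else 0) = (E2 : ℂ)) ∧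
      E2 =
        ((Real.sqrt (2 * Real.pi * t))⁻¹ * Real.exp (-(y - x - μ * t) ^ 2 / (2 * t))) *
          ((1 - Real.exp (-2 * (x - z1) * (y - z1) / t)) *
              (if 0 < (x - z1) * (y - z1) then (1 : ℝ) else 0) +
            (1 + β * s) *
              Real.exp (-(2 * (x - z1) * (y - z1) / t) *
                (if 0 < (x - z1) * (y - z1) then (1 : ℝ) else 0)) *
              (1 - β * μ * Real.sqrt (2 * Real.pi * t) *
                Real.exp ((|x - z1| + |y - z1| + t * β * μ) ^ 2 / (2 * t)) *
                gaussTail ((|x - z1| + |y - z1| + t * β * μ) / Real.sqrt t))) :=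
  transition_density_one_barrier_drift_general z1 β μ ht x y
end

section
/- Fix z1 ∈ ℝ, β ∈ (−1,1)∖{0}, μ ∈ ℝ∖{0}, t > 0, x, y ∈ ℝ, and set s = 2·1_{[z1,∞)}(y) − 1, a₂ = |y−z1| + |x−z1| − |y−x| ≥ 0, c₂(ξ) = βsξ − βμ for ξ ∈ ℂ. Let ℓ : ℝ → [0,∞) be any function with ℓ(u) → 0 as |u| → ∞. Then lim_{|u|→∞} ∫_0^{ℓ(u)} exp((v+iu)² t/2) · e^{−(v+iu)|y−x|} · ( 1 + c₂(v+iu)/(v+iu+βμ) · e^{−(v+iu) a₂} ) dv = 0. -/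
open Complex MeasureTheory

/-!
On the segments `[ℓ₁ u, ℓ₂ u] + iu` the integrand stays bounded: each exponential has an exponent
whose real part is bounded above (for the Gaussian because `Re z² = (Re z)² - (Im z)²`), and the
rational factor converges as `z → ∞`. The lengths of the segments tend to `0`.
-/

open Asymptotics Bornology Filter Topology

section General

variable {ι : Type*} {l : Filter ι}

theorem tendsto_intervalIntegral_zero_of_isBigO_one {E : Type*} [NormedAddCommGroup E]
    [NormedSpace ℝ E] {F : ι → ℝ → E} {a b : ι → ℝ} {c : ℝ}
    (hF : (fun p : ℝ × ι => F p.2 p.1) =O[𝓝 c ×ˢ l] fun _ => (1 : ℝ))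
    (ha : Tendsto a l (𝓝 c)) (hb : Tendsto b l (𝓝 c)) :
    Tendsto (fun i => ∫ v in (a i)..(b i), F i v) l (𝓝 0) := by
  obtain ⟨C, hC⟩ := hF.bound
  obtain ⟨P, hP, Q, hQ, hPQ⟩ := eventually_prod_iff.1 hC
  have hbound : ∀ᶠ i in l, ‖∫ v in (a i)..(b i), F i v‖ ≤ C * |b i - a i| := by
    filter_upwards [tendsto_smallSets_iff.1 (ha.uIcc hb) _ hP, hQ] with i hsub hQi
    refine intervalIntegral.norm_integral_le_of_norm_le_const fun v hv => ?_
    simpa using hPQ (hsub (Set.uIoc_subset_uIcc hv)) hQi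
  refine squeeze_zero_norm' hbound ?_
  simpa using (hb.sub ha).abs.const_mul C

theorem isBigO_one_cexp_of_isBoundedUnder_re {f : ι → ℂ}
    (hf : l.IsBoundedUnder (· ≤ ·) fun i => (f i).re) :
    (fun i => exp (f i)) =O[l] fun _ => (1 : ℝ) := by
  rw [← isBigO_norm_left]
  simpa only [norm_exp] using! Real.isBigO_exp_comp_one.2 hf

theorem tendsto_mul_add_div_add_cobounded {𝕜 : Type*} [NormedField 𝕜] (a b c : 𝕜) :
    Tendsto (fun z => (a * z + b) / (z + c)) (cobounded 𝕜) (𝓝 a) := by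
  have hinv : Tendsto (fun z => a + (b - a * c) * (z + c)⁻¹) (cobounded 𝕜) (𝓝 a) := by
    have hadd := tendsto_inv₀_cobounded.comp (tendsto_add_const_cobounded c)
    simpa using (hadd.const_mul (b - a * c)).const_add a
  refine hinv.congr' ?_
  filter_upwards [eventually_ne_cobounded (-c)] with z hz
  have hzc : z + c ≠ 0 := fun h => hz (eq_neg_of_add_eq_zero_left h)
  field_simp
  ring

end General

/-- The filter `Re z → c`, `|Im z| → ∞` at the two infinite ends of the vertical line `Re z = c`.
`Re z` is only required to tend to `c`, so that every set of the filter contains the segments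
`[a, b] + iu` for `a`, `b` close to `c` and `|u|` large. -/
def verticalEnds (c : ℝ) : Filter ℂ :=
  comap re (𝓝 c) ⊓ comap im (cobounded ℝ)

section VerticalEnds

variable {c : ℝ}

theorem tendsto_re_verticalEnds : Tendsto re (verticalEnds c) (𝓝 c) :=
  tendsto_comap.mono_left inf_le_left

theorem tendsto_add_mul_I_verticalEnds :
    Tendsto (fun p : ℝ × ℝ => (p.1 : ℂ) + p.2 * I) (𝓝 c ×ˢ cobounded ℝ) (verticalEnds c) := by
  refine tendsto_inf.2 ⟨tendsto_comap_iff.2 ?_, tendsto_comap_iff.2 ?_⟩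
  · simpa [Function.comp_def] using tendsto_fst
  · simpa [Function.comp_def] using tendsto_snd

theorem verticalEnds_le_cobounded : verticalEnds c ≤ cobounded ℂ := by
  have him : Tendsto (fun z : ℂ => |z.im|) (verticalEnds c) atTop :=
    tendsto_norm_cobounded_atTop.comp (tendsto_comap.mono_left inf_le_right)
  exact tendsto_id'.1 (tendsto_norm_atTop_iff_cobounded.1 (tendsto_atTop_mono abs_im_le_norm him))

theorem isBigO_one_cexp_sq_mul_verticalEnds {t : ℝ} (ht : 0 ≤ t) :
    (fun z : ℂ => exp (z ^ 2 * t / 2)) =O[verticalEnds c] fun _ => (1 : ℝ) := by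
  have hlim : Tendsto (fun z : ℂ => z.re ^ 2 * t / 2) (verticalEnds c) (𝓝 (c ^ 2 * t / 2)) :=
    ((tendsto_re_verticalEnds.pow 2).mul_const t).div_const 2
  have hle (z : ℂ) : (z ^ 2 * t / 2).re ≤ z.re ^ 2 * t / 2 := by
    calc (z ^ 2 * t / 2).re = (z.re ^ 2 - z.im ^ 2) * t / 2 := by simp [sq]
      _ ≤ z.re ^ 2 * t / 2 := by
        gcongr
        exact sub_le_self _ (sq_nonneg _)
  exact isBigO_one_cexp_of_isBoundedUnder_re (hlim.isBoundedUnder_le.mono_le (.of_forall hle))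

theorem isBigO_one_cexp_neg_mul_verticalEnds (r : ℝ) :
    (fun z : ℂ => exp (-z * r)) =O[verticalEnds c] fun _ => (1 : ℝ) := by
  have hlim : Tendsto (fun z : ℂ => (-z * r).re) (verticalEnds c) (𝓝 (-c * r)) := by
    simpa using tendsto_re_verticalEnds.neg.mul_const r
  exact isBigO_one_cexp_of_isBoundedUnder_re hlim.isBoundedUnder_le

theorem tendsto_intervalIntegral_zero_of_isBigO_verticalEnds {E : Type*} [NormedAddCommGroup E]
    [NormedSpace ℝ E] {f : ℂ → E} (hf : f =O[verticalEnds c] fun _ => (1 : ℝ)) {ℓ₁ ℓ₂ : ℝ → ℝ}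
    (hℓ₁ : Tendsto ℓ₁ (cobounded ℝ) (𝓝 c)) (hℓ₂ : Tendsto ℓ₂ (cobounded ℝ) (𝓝 c)) :
    Tendsto (fun u : ℝ => ∫ v in (ℓ₁ u)..(ℓ₂ u), f (v + u * I)) (cobounded ℝ) (𝓝 0) :=
  tendsto_intervalIntegral_zero_of_isBigO_one
    (hf.comp_tendsto tendsto_add_mul_I_verticalEnds) hℓ₁ hℓ₂

end VerticalEnds

theorem segment_integral_tendsto_zero_drift_general {t : ℝ} (ht : 0 ≤ t) (r₁ r₂ : ℝ) (a b p : ℂ)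
    {c : ℝ} {ℓ₁ ℓ₂ : ℝ → ℝ}
    (hℓ₁ : Tendsto ℓ₁ (cobounded ℝ) (𝓝 c)) (hℓ₂ : Tendsto ℓ₂ (cobounded ℝ) (𝓝 c)) :
    Tendsto
      (fun u : ℝ =>
        ∫ v in (ℓ₁ u)..(ℓ₂ u),
          exp (((v : ℂ) + u * I) ^ 2 * t / 2) * exp (-((v : ℂ) + u * I) * r₁) *
            (1 + (a * ((v : ℂ) + u * I) + b) / ((v : ℂ) + u * I + p) *
              exp (-((v : ℂ) + u * I) * r₂)))
      (cobounded ℝ) (𝓝 0) := by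
  have hratio : (fun z : ℂ => (a * z + b) / (z + p)) =O[verticalEnds c] fun _ => (1 : ℝ) :=
    ((tendsto_mul_add_div_add_cobounded a b p).mono_left verticalEnds_le_cobounded).isBigO_one ℝ
  have hgauss : (fun z : ℂ => exp (z ^ 2 * t / 2) * exp (-z * r₁)) =O[verticalEnds c]
      fun _ => (1 : ℝ) := by
    simpa only [mul_one] using (isBigO_one_cexp_sq_mul_verticalEnds ht).mul
      (isBigO_one_cexp_neg_mul_verticalEnds r₁)
  have hcorrection : (fun z : ℂ => (a * z + b) / (z + p) * exp (-z * r₂)) =O[verticalEnds c]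
      fun _ => (1 : ℝ) := by
    simpa only [mul_one] using hratio.mul (isBigO_one_cexp_neg_mul_verticalEnds r₂)
  have hintegrand : (fun z : ℂ => exp (z ^ 2 * t / 2) * exp (-z * r₁) *
      (1 + (a * z + b) / (z + p) * exp (-z * r₂))) =O[verticalEnds c] fun _ => (1 : ℝ) := by
    simpa only [mul_one] using
      hgauss.mul ((isBigO_const_const (1 : ℂ) one_ne_zero _).add hcorrection)
  exact tendsto_intervalIntegral_zero_of_isBigO_verticalEnds hintegrand hℓ₁ hℓ₂

/-- the integral over the horizontal segment ρ_M tends to 0 as |u| → ∞,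
for the β-SBM with drift μ. -/
theorem segment_integral_tendsto_zero_drift
    (z1 : ℝ) (β : ℝ) (hβ : β ∈ Set.Ioo (-1 : ℝ) 1) (hβ0 : β ≠ 0)
    (μ : ℝ) (hμ : μ ≠ 0) (t : ℝ) (ht : 0 < t) (x y : ℝ)
    (ℓ : ℝ → ℝ) (hℓ0 : ∀ u, 0 ≤ ℓ u)
    (hℓ : Filter.Tendsto ℓ (Filter.comap (fun u : ℝ => |u|) Filter.atTop) (nhds 0)) :
    let s : ℝ := 2 * (if z1 ≤ y then (1 : ℝ) else 0) - 1
    let a2 : ℝ := |y - z1| + |x - z1| - |y - x|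
    Filter.Tendsto
      (fun u : ℝ =>
        ∫ v in (0 : ℝ)..(ℓ u),
          Complex.exp (((v : ℂ) + u * Complex.I) ^ 2 * t / 2) *
            Complex.exp (-((v : ℂ) + u * Complex.I) * |y - x|) *
            (1 + ((β : ℂ) * s * ((v : ℂ) + u * Complex.I) - (β : ℂ) * μ) /
                ((v : ℂ) + u * Complex.I + (β : ℂ) * μ) *
              Complex.exp (-((v : ℂ) + u * Complex.I) * a2)))
      (Filter.comap (fun u : ℝ => |u|) Filter.atTop) (nhds 0) := by
  intro s a2
  have habs : comap (fun u : ℝ => |u|) atTop = cobounded ℝ := comap_norm_atTop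
  rw [habs] at hℓ ⊢
  simpa [sub_eq_add_neg] using! segment_integral_tendsto_zero_drift_general ht.le |y - x| a2
    (β * s) (-(β * μ)) (β * μ) tendsto_const_nhds hℓ
end
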